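/- There exists a widely digitally delicate prime in base 11; that is, there exists a prime p such that for every natural number i and every digit d ∈ {0, 1, ..., 10} with d ≠ digit_i(p), where digit_i(p) denotes the i-th base-11 digit of p (counting from the least significant digit, i = 0, with digit_i(p) = 0 for all i at or beyond the number of base-11 digits of p, i.e., leading zeros), the number p + (d − digit_i(p))·11^i obtained by replacing the i-th base-11 digit of p (including leading zeros) with d is not prime. -/

import Mathlib

/-- The i-th base-11 digit (from the least significant, starting at i = 0) of n;
for i at or beyond the number of base-11 digits of n this is 0 (a leading zero). -/
def digit (n i : ℕ) : ℕ := n / 11 ^ i % 11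

/-- Covering moduli `m`, with an exponent `n` such that `11 ^ n ≡ 1` modulo `m`. -/
def covMods : List (ℕ × ℕ) :=
  [(2, 1), (5, 1), (3, 2), (7, 3), (19, 3), (61, 4), (3221, 5), (37, 6), (43, 7), (45319, 7),
    (7321, 8), (1772893, 9), (13421, 10), (13, 12), (1117, 12), (1623931, 14), (195019441, 15),
    (17, 16), (6304673, 16), (590077, 18), (212601841, 20), (1723, 21), (8527, 21), (27763, 21),
    (10657, 24), (20113, 24), (29, 28), (1933, 28), (55527473, 28), (31, 30), (7537711, 30), (211,
    35), (42437717969530394595211, 35), (3138426605161, 36), (41, 40), (1120648576818041, 40),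
    (3421169496361, 42), (9842332430037465033595921, 45), (97, 48), (241, 48), (1777, 48),
    (1106131489, 48), (113, 56), (449, 56), (2521, 56), (77001139434480073, 56),
    (46329453543600481, 60), (127, 63), (8317, 63), (867259, 63), (106431697, 63),
    (316825425410373433, 63), (71, 70), (7561, 70), (17011, 70), (1649341, 70), (10047871, 70),
    (73, 72), (40177, 72), (3358335487319458201, 72), (5281, 80), (399806412551699044818733915681,
    80), (19069, 84), (520799717831587692709, 84), (181, 90), (631, 90), (86306335830799838011,
    90), (540751, 105), (599551, 105), (2598121, 105), (126713791, 105), (2373141440024702184811,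
    105), (337, 112), (394129, 112), (3090443962383595123379137, 112), (52020741601, 120),
    (40589999671017742452961, 120), (3304981, 126), (468843103, 126), (71596275661, 126),
    (278853374647, 126), (2970941, 140), (32925268156330499785365829732750601117816501, 140),
    (110161, 144), (331921, 144), (2653299576575651630603169124592864247361, 144), (201407641,
    168), (70107576001, 168), (6871280144418624289685328789001, 168), (9001, 180), (16921, 180),
    (22501, 180), (28309390942693823829766228460785185421, 180), (275310421, 210), (137031343051,
    210), (2359101627084759668315785103671, 210), (3121, 240), (114001, 240), (1698371041, 240),
    (7377289841763386196274521095431949762000607324961, 240), (2017, 252), (21673, 252),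
    (21859923981073423323796488634445867249328304474334535293672648146921, 252), (281, 280),
    (33498172693966456110917622231855841927746351803531652987224367452516926726862368795636234633815401,
    280), (52081, 336),
    (1434314770769195889214711370460568929588066931819805395534836149377719672272587199862890401,
    336)]

/-- The residue of the prime modulo the product of the moduli and `11 ^ 3`. -/
def covRes : ℕ :=
  60640337745654086353234563071148888452073192007676341769702106737607135199651082237018782970035809138961556027890832084757749880643057097299361803160637881336875986661188503478877287684584736919116559695993041575841943686662033243408032365768393384513932865810469017121809222224121947725202730723416434123261845346470896963025499067459424220966435851839978783370214421873859053385712528691290936652225274472223947089887990489161124913915740713846190734181835468147781158133244989564483221572522732373816949038130094530253694398022765118207217765712359786411739098727691625049010182956697233945265758298312317278222559408417395160596947951639300255808339317513190898489102626991729480282995807883476698216469939216252881548706672370370056991211167806600873563674945624294348852496557446249877623247740247970141615275964991346767377839560934334918258621934491095624662450833662459695504279879746229316316911730737780877075450264710659883210912842789307733383733433996446760732227653210813503561094361368734186237987992868138898303445133652397807900150503857527899942684352602900447010638834528179854741350451318526069301778304881876164608169338325577518231063383191664841051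

def covMod : ℕ := 1331 * (covMods.map Prod.fst).prod

/-- For each change `k` of a digit: pairs (index of modulus, class of the position). -/
def covClasses : ℤ → List (ℕ × ℕ)
  | -10 =>
    [(2, 0), (4, 2), (7, 3), (13, 7), (14, 1)]
  | -8 =>
    [(2, 1), (3, 2), (12, 2), (15, 2), (20, 0), (26, 0), (29, 6), (30, 16), (31, 24), (34, 10),
    (38, 30), (52, 48), (53, 8), (54, 68), (55, 18), (56, 38), (64, 54), (65, 24), (69, 19), (76,
    70), (81, 98), (82, 14), (89, 174), (90, 84), (93, 4), (94, 64), (95, 34), (97, 150)]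
  | -6 =>
    [(1, 0)]
  | -4 =>
    [(2, 0), (3, 1), (13, 3), (17, 5), (25, 9), (26, 9), (33, 23), (38, 17), (39, 41), (41, 29),
    (45, 45), (57, 47), (58, 71), (59, 35), (72, 109), (74, 29), (84, 11), (85, 83), (86, 69),
    (105, 285), (106, 189)]
  | -2 =>
    [(2, 1), (3, 0), (11, 5), (13, 10), (19, 8), (24, 16), (26, 18), (37, 20), (38, 4), (40, 28),
    (47, 20), (65, 38), (66, 56), (67, 14), (68, 89), (70, 44), (71, 29), (78, 38), (91, 2), (92,
    92), (103, 4), (104, 144)]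
  | 2 =>
    [(2, 0), (5, 1), (10, 3), (17, 15), (18, 7)]
  | 4 =>
    [(1, 0)]
  | 6 =>
    [(3, 2), (4, 0), (8, 6), (9, 2), (21, 19), (22, 7), (23, 4), (26, 15), (42, 29), (48, 52), (49,
    31), (50, 1), (51, 10), (57, 49), (80, 106), (100, 169), (101, 148), (102, 22)]
  | 8 =>
    [(2, 0), (6, 0), (12, 7), (15, 9), (16, 11), (17, 11), (29, 21), (30, 1), (32, 28), (35, 9),
    (39, 19), (46, 59), (52, 13), (53, 43), (54, 33), (55, 53), (56, 3), (57, 3), (60, 79), (61,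
    29), (64, 9), (65, 69), (75, 109), (83, 21), (96, 149), (98, 39), (99, 199)]
  | 10 =>
    [(2, 1), (3, 1), (7, 0), (8, 1), (17, 12), (26, 2), (27, 26), (28, 6), (36, 38), (42, 40), (43,
    0), (44, 48), (47, 53), (62, 44), (63, 14), (73, 20), (77, 32), (79, 74), (87, 68), (88, 140)]
  | _ => [(0, 0)]

/-- Checks that every `i` with `i % N = a` lies in one of the classes of `l`, each given as
(modulus, class), by successively splitting according to the factors in the last argument. -/
def covAll (l : List (ℕ × ℕ)) : List ℕ → ℕ → ℕ → Bool
  | [], a, N => l.any (fun x => Nat.beq (a % x.1) x.2 && Nat.beq (N % x.1) 0)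
  | f :: fs, a, N => l.any (fun x => Nat.beq (a % x.1) x.2 && Nat.beq (N % x.1) 0) ||
      (f != 0 && (List.range f).all (fun j => covAll l fs (a + N * j) (N * f)))

theorem covAny_spec (l : List (ℕ × ℕ)) (a N i : ℕ) (hi : i % N = a)
    (h : l.any (fun x => Nat.beq (a % x.1) x.2 && Nat.beq (N % x.1) 0) = true) :
    ∃ x ∈ l, i % x.1 = x.2 := by
  rw [List.any_eq_true] at h
  obtain ⟨x, hx, h2⟩ := h
  rw [Bool.and_eq_true, Nat.beq_eq, Nat.beq_eq] at h2
  refine ⟨x, hx, ?_⟩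
  rw [← h2.1, ← hi, Nat.mod_mod_of_dvd _ (Nat.dvd_of_mod_eq_zero h2.2)]

theorem covAll_spec (l : List (ℕ × ℕ)) (fs : List ℕ) : ∀ (a N : ℕ), covAll l fs a N = true →
    ∀ i, i % N = a → ∃ x ∈ l, i % x.1 = x.2 := by
  induction fs with
  | nil => intro a N h i hi; exact covAny_spec l a N i hi h
  | cons f fs ih =>
    intro a N h i hi
    rw [covAll, Bool.or_eq_true] at h
    rcases h with h | h
    · exact covAny_spec l a N i hi h
    · rw [Bool.and_eq_true, bne_iff_ne, List.all_eq_true] at h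
      refine ih _ _ (h.2 (i / N % f)
        (List.mem_range.mpr (Nat.mod_lt _ (Nat.pos_of_ne_zero h.1)))) i ?_
      rw [Nat.mod_mul, hi]

/-- The modulus (with its exponent) of a given index. -/
def covGet (j : ℕ) : ℕ × ℕ := covMods.getD j (2, 1)

def covPairs (k : ℤ) : List (ℕ × ℕ) := (covClasses k).map (fun x => ((covGet x.1).2, x.2))

def covGood (k : ℤ) : Bool :=
  (covClasses k).all (fun x => x.1 < covMods.length &&
    ((covRes : ℤ) + k * 11 ^ x.2) % ((covGet x.1).1 : ℤ) == 0) && covAll (covPairs k) [2, 2, 3, 2, 2, 5, 7, 3] 0 1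

theorem covGood_all : ∀ d : ℕ, d < 21 → d = 10 ∨ covGood ((d : ℤ) - 10) = true := by
  decide +kernel

theorem covMods_good : (covMods.all fun x => 1 < x.1 && x.1 < 10 ^ 100 &&
    (11 ^ x.2 - 1) % x.1 == 0 && covRes % 1331 != x.1 % 1331) = true := by
  decide +kernel

theorem covRes_coprime : Nat.Coprime covRes covMod := by
  have : Nat.gcd covRes covMod = 1 := by decide +kernel
  exact this

theorem cov_exists (k : ℤ) (hk : -10 ≤ k) (hk' : k ≤ 10) (hk0 : k ≠ 0) (i : ℕ) :
    ∃ x ∈ covMods, (x.1 : ℤ) ∣ (covRes : ℤ) + k * 11 ^ i := by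
  have h := covGood_all (k + 10).toNat (by omega)
  have h2 : (((k + 10).toNat : ℕ) : ℤ) - 10 = k := by omega
  rw [h2] at h
  replace h : covGood k = true := by
    rcases h with h | h
    · omega
    · exact h
  rw [covGood, Bool.and_eq_true, List.all_eq_true] at h
  obtain ⟨ha, hb⟩ := h
  obtain ⟨y, hy, hy2⟩ := covAll_spec _ _ _ _ hb i (Nat.mod_one i)
  rw [covPairs, List.mem_map] at hy
  obtain ⟨z, hz, rfl⟩ := hy
  have hz2 := ha z hz
  rw [Bool.and_eq_true, decide_eq_true_eq, beq_iff_eq] at hz2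
  obtain ⟨hlen, hdiv⟩ := hz2
  have hmem : covGet z.1 ∈ covMods := by
    rw [covGet, List.getD_eq_getElem _ _ hlen]
    exact List.getElem_mem hlen
  have hg := (List.all_eq_true.mp covMods_good) _ hmem
  simp only [Bool.and_eq_true, decide_eq_true_eq, beq_iff_eq] at hg
  obtain ⟨⟨_, hord⟩, _⟩ := hg
  refine ⟨covGet z.1, hmem, ?_⟩
  generalize covGet z.1 = x at *
  simp only at hy2
  have h11 : (11 : ℤ) ^ x.2 ≡ 1 [ZMOD (x.1 : ℤ)] := by
    have h3 : (x.1 : ℤ) ∣ ((11 ^ x.2 - 1 : ℕ) : ℤ) :=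
      Int.natCast_dvd_natCast.mpr (Nat.dvd_of_mod_eq_zero hord)
    rw [Nat.cast_sub (Nat.one_le_pow _ _ (by norm_num))] at h3
    push_cast at h3
    exact ((Int.modEq_iff_dvd).mpr h3).symm
  have hpow : (11 : ℤ) ^ i ≡ 11 ^ z.2 [ZMOD (x.1 : ℤ)] := by
    conv_lhs => rw [← Nat.mod_add_div i x.2, hy2, pow_add, pow_mul]
    simpa using (Int.ModEq.refl ((11 : ℤ) ^ z.2)).mul (h11.pow (i / x.2))
  have hfin : (covRes : ℤ) + k * 11 ^ i ≡ 0 [ZMOD (x.1 : ℤ)] :=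
    ((hpow.mul_left k).add_left _).trans hdiv
  exact Int.modEq_zero_iff_dvd.mp hfin

/-- There exists a widely digitally delicate prime in base 11: a prime p such
that replacing any one of its base-11 digits, including any of its leading
zeros, by a different digit in {0, ..., 10} yields a number that is not prime. -/
theorem exists_widely_digitally_delicate_base_11 :
    ∃ p : ℕ, Nat.Prime p ∧
      ∀ i : ℕ, ∀ d : ℕ, d ≤ 10 → d ≠ digit p i →
        ¬ Nat.Prime (p - digit p i * 11 ^ i + d * 11 ^ i) := by
  have hne : NeZero covMod := ⟨by
    have : (covMod == 0) = false := by decide +kernel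
    simpa using this⟩
  obtain ⟨p, hpgt, hp, hmod⟩ := Nat.forall_exists_prime_gt_and_eq_mod
    ((ZMod.isUnit_iff_coprime covRes covMod).mpr covRes_coprime) (10 ^ 101)
  rw [ZMod.natCast_eq_natCast_iff] at hmod
  refine ⟨p, hp, ?_⟩
  intro i d hd hne' hN
  have hdig : digit p i < 11 := Nat.mod_lt _ (by norm_num)
  have hle : digit p i * 11 ^ i ≤ p :=
    (Nat.mul_le_mul_right _ (Nat.mod_le _ _)).trans (Nat.div_mul_le_self _ _)
  obtain ⟨x, hx, hdvd⟩ := cov_exists ((d : ℤ) - digit p i) (by omega) (by omega)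
    (by omega) i
  have hg := (List.all_eq_true.mp covMods_good) _ hx
  simp only [Bool.and_eq_true, decide_eq_true_eq, bne_iff_ne] at hg
  obtain ⟨⟨⟨hgt, hlt⟩, _⟩, hres⟩ := hg
  have hxM : x.1 ∣ covMod :=
    Dvd.dvd.mul_left (List.dvd_prod (List.mem_map.mpr ⟨x, hx, rfl⟩)) _
  have hpx : (p : ℤ) ≡ covRes [ZMOD (x.1 : ℤ)] :=
    (Int.natCast_modEq_iff).mpr (hmod.of_dvd hxM)
  have hcast : ((p - digit p i * 11 ^ i + d * 11 ^ i : ℕ) : ℤ)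
      = p + ((d : ℤ) - digit p i) * 11 ^ i := by
    rw [Nat.cast_add, Nat.cast_sub hle]
    push_cast
    ring
  have hd1 : x.1 ∣ p - digit p i * 11 ^ i + d * 11 ^ i := by
    rw [← Int.natCast_dvd_natCast, hcast]
    exact Int.modEq_zero_iff_dvd.mp ((hpx.add_right _).trans (Int.modEq_zero_iff_dvd.mpr hdvd))
  have heq : x.1 = p - digit p i * 11 ^ i + d * 11 ^ i :=
    ((Nat.dvd_prime hN).mp hd1).resolve_left (by omega)
  have hpe : p + d * 11 ^ i = x.1 + digit p i * 11 ^ i := by omega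
  rcases lt_or_ge i 3 with h3 | h3
  · have h4 : 11 ^ i ≤ 11 ^ 3 := Nat.pow_le_pow_right (by norm_num) h3.le
    have h5 : digit p i * 11 ^ i ≤ 10 * 11 ^ 3 := Nat.mul_le_mul (by omega) h4
    have h6 : (10 : ℕ) ^ 100 + 10 * 11 ^ 3 < 10 ^ 101 := by norm_num
    omega
  · have h4 : 1331 ∣ 11 ^ i := by
      have := pow_dvd_pow 11 h3
      norm_num at this
      exact this
    have h5 := hmod.of_dvd (Dvd.intro _ rfl : 1331 ∣ covMod)
    have h6 : 1331 ∣ d * 11 ^ i := Dvd.dvd.mul_left h4 _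
    have h7 : 1331 ∣ digit p i * 11 ^ i := Dvd.dvd.mul_left h4 _
    apply hres
    unfold Nat.ModEq at h5
    omega
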